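/- For integers k ≥ 1 and 1 ≤ a ≤ k: Σ_{n≥0} U_{2k,2a}(n) q^n = (−q;q)_∞ (q^{2a}, q^{4k−2a}, q^{4k}; q^{4k})_∞ / (q^2;q^2)_∞, where U_{2k,2a}(n) counts overpartitions of n satisfying f_1 ≤ 2a−1+f_{1̄}, f_{2l−1} ≥ f_{\overline{2l−1}}, f_{2l}+f_{\overline{2l}} ≡ 0 (mod 2), and f_l + f_{l̄} + f_{l+1} ≤ 2k−1+f_{\overline{l+1}} for all l ≥ 1. -/

import Mathlib

/-- An overpartition recorded by a pair of multiplicity functions: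
`p.1 i` is the number of non-overlined occurrences of the part `i` and
`p.2 i ∈ {0, 1}` is the number of overlined occurrences of `i`.
There are no parts equal to `0`. -/
def IsOverPtn (p : (ℕ →₀ ℕ) × (ℕ →₀ ℕ)) : Prop :=
  p.1 0 = 0 ∧ p.2 0 = 0 ∧ ∀ i, p.2 i ≤ 1

/-- The number of parts of an overpartition. -/
def opParts (p : (ℕ →₀ ℕ) × (ℕ →₀ ℕ)) : ℕ :=
  (p.1.sum fun _ v => v) + (p.2.sum fun _ v => v)

/-- The weight (number partitioned) of an overpartition. -/
def opWt (p : (ℕ →₀ ℕ) × (ℕ →₀ ℕ)) : ℕ :=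
  (p.1.sum fun i v => i * v) + (p.2.sum fun i v => i * v)

/-- Conditions (i)-(iv) of Definition 1.6 (Kursungoz–Zadehdabbagh), with modulus `d`,
first index `N = dk + e` and second index `M = da + f`: writing `f_i = p.1 i`,
`f_{ī} = p.2 i`,
(i) `f_1 ≤ M - 1 + (d-1) f_{1̄}`;
(ii) `f_{2l-1} ≥ (d-1) f_{\overline{2l-1}}`;
(iii) `f_{2l} + f_{\overline{2l}} ≡ 0 (mod d)`;
(iv) `f_l + f_{l̄} + f_{l+1} ≤ N - 1 + (d-1) f_{\overline{l+1}}` for all `l ≥ 1`. -/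
def uCond (d N M : ℕ) (p : (ℕ →₀ ℕ) × (ℕ →₀ ℕ)) : Prop :=
  p.1 1 + 1 ≤ M + (d - 1) * p.2 1 ∧
  (∀ l : ℕ, (d - 1) * p.2 (2 * l + 1) ≤ p.1 (2 * l + 1)) ∧
  (∀ l : ℕ, d ∣ p.1 (2 * l + 2) + p.2 (2 * l + 2)) ∧
  (∀ l : ℕ, 1 ≤ l → p.1 l + p.2 l + p.1 (l + 1) + 1 ≤ N + (d - 1) * p.2 (l + 1))

/-- Conditions (ī)-(iv̄): as `uCond` with the parity roles of odd and even parts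
swapped in the second and third conditions. -/
def ubarCond (d N M : ℕ) (p : (ℕ →₀ ℕ) × (ℕ →₀ ℕ)) : Prop :=
  p.1 1 + 1 ≤ M + (d - 1) * p.2 1 ∧
  (∀ l : ℕ, (d - 1) * p.2 (2 * l + 2) ≤ p.1 (2 * l + 2)) ∧
  (∀ l : ℕ, d ∣ p.1 (2 * l + 1) + p.2 (2 * l + 1)) ∧
  (∀ l : ℕ, 1 ≤ l → p.1 l + p.2 l + p.1 (l + 1) + 1 ≤ N + (d - 1) * p.2 (l + 1))

/-- `u_{N, M}(m, n)`: the number of overpartitions of `n` into `m` parts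
satisfying conditions (i)-(iv). -/
noncomputable def uCount (d N M m n : ℕ) : ℕ :=
  Set.ncard {p : (ℕ →₀ ℕ) × (ℕ →₀ ℕ) |
    IsOverPtn p ∧ opParts p = m ∧ opWt p = n ∧ uCond d N M p}

/-- `ū_{N, M}(m, n)`: the number of overpartitions of `n` into `m` parts
satisfying conditions (ī)-(iv̄). -/
noncomputable def ubarCount (d N M m n : ℕ) : ℕ :=
  Set.ncard {p : (ℕ →₀ ℕ) × (ℕ →₀ ℕ) |
    IsOverPtn p ∧ opParts p = m ∧ opWt p = n ∧ ubarCond d N M p}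

/-- The two-variable generating function `U_{N,M}(x) = Σ u_{N,M}(m,n) x^m q^n`. -/
noncomputable def Ugf (d N M : ℕ) (x q : ℂ) : ℂ :=
  ∑' mn : ℕ × ℕ, (uCount d N M mn.1 mn.2 : ℂ) * x ^ mn.1 * q ^ mn.2

/-- The two-variable generating function `Ū_{N,M}(x) = Σ ū_{N,M}(m,n) x^m q^n`. -/
noncomputable def UbarGf (d N M : ℕ) (x q : ℂ) : ℂ :=
  ∑' mn : ℕ × ℕ, (ubarCount d N M mn.1 mn.2 : ℂ) * x ^ mn.1 * q ^ mn.2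

/-- The infinite q-Pochhammer symbol `(a; q)_∞ = ∏_{j ≥ 0} (1 - a q^j)`. -/
noncomputable def qPochInf (a q : ℂ) : ℂ := ∏' j : ℕ, (1 - a * q ^ j)

/-- The finite q-Pochhammer symbol `(a; q)_n = ∏_{j=0}^{n-1} (1 - a q^j)`. -/
noncomputable def qPochFin (a q : ℂ) (n : ℕ) : ℂ := ∏ j ∈ Finset.range n, (1 - a * q ^ j)

/-!
Fix `k`, and let `T_j(s)` be the generating function of the overpartitions without parts `≤ j` that
satisfy the conditions on the parts `> j` when the part `j` is deemed to occur `s` times, so that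
the left-hand side of the theorem is `T_0(2(k - a))`. Lowering `s` by two admits two (if `j + 1` is
even) or four (if `j + 1` is odd) further multiplicities of the part `j + 1`; this expresses
`T_j(2c) - T_j(2(c + 1))` through `T_{j + 1}`, and after the factors `1 + q ^ i`, `i` odd, have been
removed it is the Gordon-type recurrence in `q ^ 2` satisfied by Andrews' series
`H_{k,b}(-1/q; x; q)`. The coefficients of the recurrence decay geometrically in the level `j`, so a
solution is determined by its limit at infinity. At level `0` Andrews' series is a theta series,
which the Jacobi triple product turns into a product.
-/

open Filter Topology

section QPochhammer

variable {q : ℂ}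

lemma norm_sq_lt_one (hq : ‖q‖ < 1) : ‖q ^ 2‖ < 1 := by
  rw [norm_pow]
  exact pow_lt_one₀ (norm_nonneg q) hq two_ne_zero

lemma summable_norm_neg_mul_pow (hq : ‖q‖ < 1) (a : ℂ) :
    Summable fun j : ℕ => ‖-(a * q ^ j)‖ := by
  simpa using (summable_geometric_of_lt_one (norm_nonneg q) hq).mul_left ‖a‖

lemma multipliable_one_sub_mul_pow (hq : ‖q‖ < 1) (a : ℂ) :
    Multipliable fun j : ℕ => 1 - a * q ^ j := by
  simpa only [sub_eq_add_neg] using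
    multipliable_one_add_of_summable (summable_norm_neg_mul_pow hq a)

lemma hasProd_qPochInf (hq : ‖q‖ < 1) (a : ℂ) :
    HasProd (fun j : ℕ => 1 - a * q ^ j) (qPochInf a q) :=
  (multipliable_one_sub_mul_pow hq a).hasProd

lemma tendsto_qPochFin (hq : ‖q‖ < 1) (a : ℂ) :
    Tendsto (qPochFin a q) atTop (𝓝 (qPochInf a q)) :=
  (hasProd_qPochInf hq a).tendsto_prod_nat

lemma one_sub_mul_pow_ne_zero (hq : ‖q‖ < 1) {a : ℂ} (ha : ‖a‖ < 1) (j : ℕ) :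
    1 - a * q ^ j ≠ 0 := by
  have hlt : ‖a * q ^ j‖ < 1 := by
    rw [norm_mul, norm_pow]
    exact mul_lt_one_of_nonneg_of_lt_one_left (norm_nonneg _) ha
      (pow_le_one₀ (norm_nonneg _) hq.le)
  exact sub_ne_zero.mpr fun h => hlt.ne (by rw [← h, norm_one])

lemma qPochInf_ne_zero (hq : ‖q‖ < 1) {a : ℂ} (ha : ‖a‖ < 1) : qPochInf a q ≠ 0 := by
  simpa only [qPochInf, sub_eq_add_neg] using
    tprod_one_add_ne_zero_of_summable (f := fun j : ℕ => -(a * q ^ j))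
      (fun j => by simpa only [sub_eq_add_neg] using one_sub_mul_pow_ne_zero hq ha j)
      (summable_norm_neg_mul_pow hq a)

lemma qPochFin_ne_zero (hq : ‖q‖ < 1) {a : ℂ} (ha : ‖a‖ < 1) (n : ℕ) : qPochFin a q n ≠ 0 :=
  Finset.prod_ne_zero_iff.mpr fun j _ => one_sub_mul_pow_ne_zero hq ha j

lemma qPochFin_succ (a q : ℂ) (n : ℕ) :
    qPochFin a q (n + 1) = qPochFin a q n * (1 - a * q ^ n) :=
  Finset.prod_range_succ _ _

lemma qPochInf_sq_mul_qPochInf_sq (hq : ‖q‖ < 1) (a : ℂ) :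
    qPochInf a (q ^ 2) * qPochInf (a * q) (q ^ 2) = qPochInf a q := by
  have hq2 := norm_sq_lt_one hq
  have even : HasProd (fun j : ℕ => 1 - a * q ^ (2 * j)) (qPochInf a (q ^ 2)) := by
    simpa only [pow_mul] using hasProd_qPochInf hq2 a
  have odd : HasProd (fun j : ℕ => 1 - a * q ^ (2 * j + 1)) (qPochInf (a * q) (q ^ 2)) := by
    simpa only [pow_succ', pow_mul, mul_assoc] using hasProd_qPochInf hq2 (a * q)
  exact (even.even_mul_odd (f := fun j => 1 - a * q ^ j) odd).unique (hasProd_qPochInf hq a)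

end QPochhammer

section JacobiTripleProduct

variable {p : ℂ}

/-- The reciprocal `1 / (p; p)_m` of the `p`-factorial, extended by zero to negative `m` so that
`qFactInv_sub_one` holds for every integer. -/
noncomputable def qFactInv (p : ℂ) (m : ℤ) : ℂ :=
  if m < 0 then 0 else (qPochFin p p m.toNat)⁻¹

lemma qFactInv_of_neg {m : ℤ} (hm : m < 0) : qFactInv p m = 0 := if_pos hm

lemma qFactInv_natCast (n : ℕ) : qFactInv p n = (qPochFin p p n)⁻¹ := by
  simp [qFactInv]

lemma qFactInv_sub_one (hp : ‖p‖ < 1) (m : ℤ) :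
    qFactInv p (m - 1) = (1 - p ^ m) * qFactInv p m := by
  rcases lt_trichotomy m 0 with h | rfl | h
  · rw [qFactInv_of_neg h, qFactInv_of_neg (by omega), mul_zero]
  · simp [qFactInv]
  · obtain ⟨n, rfl⟩ : ∃ n : ℕ, m = (n + 1 : ℕ) := ⟨(m - 1).toNat, by omega⟩
    have hn := one_sub_mul_pow_ne_zero hp hp n
    have hfact := qPochFin_ne_zero hp hp n
    rw [Nat.cast_succ, add_sub_cancel_right, ← Nat.cast_succ, qFactInv_natCast, qFactInv_natCast,
      zpow_natCast, qPochFin_succ, pow_succ']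
    field_simp

lemma tendsto_qFactInv_natCast (hp : ‖p‖ < 1) :
    Tendsto (fun n : ℕ => qFactInv p n) atTop (𝓝 (qPochInf p p)⁻¹) := by
  simpa only [qFactInv_natCast] using (tendsto_qPochFin hp p).inv₀ (qPochInf_ne_zero hp hp)

lemma exists_norm_qFactInv_le (hp : ‖p‖ < 1) : ∃ K : ℝ, ∀ m, ‖qFactInv p m‖ ≤ K := by
  obtain ⟨K, hK⟩ := (tendsto_qFactInv_natCast hp).norm.bddAbove_range
  have hnat (n : ℕ) : ‖qFactInv p n‖ ≤ K := hK (Set.mem_range_self n)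
  refine ⟨K, fun m => ?_⟩
  rcases lt_or_ge m 0 with hm | hm
  · rw [qFactInv_of_neg hm, norm_zero]
    exact (norm_nonneg _).trans (hnat 0)
  · lift m to ℕ using hm
    exact hnat m

lemma tendsto_qFactInv (hp : ‖p‖ < 1) :
    Tendsto (qFactInv p) atTop (𝓝 (qPochInf p p)⁻¹) := by
  rw [← Nat.map_cast_int_atTop, tendsto_map'_iff]
  exact tendsto_qFactInv_natCast hp

/-- The Gaussian binomial coefficient `[M + N choose M - n]` in base `p`, recentred so that it
vanishes unless `-N ≤ n ≤ M`. -/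
noncomputable def centeredQBinom (p : ℂ) (M N : ℕ) (n : ℤ) : ℂ :=
  qPochFin p p (M + N) * qFactInv p (M - n) * qFactInv p (N + n)

lemma centeredQBinom_neg (M N : ℕ) (n : ℤ) :
    centeredQBinom p M N (-n) = centeredQBinom p N M n := by
  simp only [centeredQBinom, sub_neg_eq_add, ← sub_eq_add_neg, add_comm M N]
  ring

lemma centeredQBinom_zero_zero (n : ℤ) : centeredQBinom p 0 0 n = if n = 0 then 1 else 0 := by
  rcases lt_trichotomy n 0 with h | rfl | h
  · simp [centeredQBinom, qFactInv_of_neg h, h.ne]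
  · simp [centeredQBinom, qFactInv, qPochFin]
  · simp [centeredQBinom, qFactInv_of_neg (neg_lt_zero.mpr h), h.ne']

lemma centeredQBinom_succ_left (hp : ‖p‖ < 1) (hp0 : p ≠ 0) (M N : ℕ) (n : ℤ) :
    centeredQBinom p (M + 1) N n
      = centeredQBinom p M N n + p ^ (M + 1 - n) * centeredQBinom p M N (n - 1) := by
  have hexp : p * p ^ (M + N) = p ^ (M + 1 - n) * p ^ (N + n) := by
    rw [← pow_succ', ← zpow_natCast, ← zpow_add₀ hp0]
    congr 1
    push_cast
    ring
  have hM : qFactInv p (M - n) = (1 - p ^ (M + 1 - n)) * qFactInv p (M + 1 - n) := by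
    rw [← qFactInv_sub_one hp]
    congr 1
    ring
  have hN : qFactInv p (N + (n - 1)) = (1 - p ^ (N + n)) * qFactInv p (N + n) := by
    rw [← qFactInv_sub_one hp, add_sub_assoc]
  rw [centeredQBinom, centeredQBinom, centeredQBinom, Nat.add_right_comm, qPochFin_succ, hexp,
    hM, hN, Nat.cast_succ, show (M : ℤ) - (n - 1) = M + 1 - n by ring]
  ring

variable {x z : ℂ}

lemma hasSum_centeredQBinom_succ_left (hx : ‖x‖ < 1) (hx0 : x ≠ 0) (hz : z ≠ 0) {M N : ℕ} {S : ℂ}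
    (h : HasSum (fun n : ℤ => centeredQBinom (x ^ 2) M N n * (x ^ n ^ 2 * z ^ n)) S) :
    HasSum (fun n : ℤ => centeredQBinom (x ^ 2) (M + 1) N n * (x ^ n ^ 2 * z ^ n))
      (S * (1 - -(x * z) * (x ^ 2) ^ M)) := by
  have hx2 := norm_sq_lt_one hx
  have shift := ((Equiv.subRight (1 : ℤ)).hasSum_iff.mpr h).mul_left (x * z * (x ^ 2) ^ M)
  rw [show S * (1 - -(x * z) * (x ^ 2) ^ M) = S + x * z * (x ^ 2) ^ M * S by ring]
  refine (h.add shift).congr_fun fun n => ?_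
  have hexp : (x ^ 2) ^ ((M : ℤ) + 1 - n) * x ^ n ^ 2 = x * (x ^ 2) ^ M * x ^ (n - 1) ^ 2 := by
    rw [← pow_mul, ← pow_succ', ← zpow_natCast, ← zpow_natCast, ← zpow_mul, ← zpow_add₀ hx0,
      ← zpow_add₀ hx0]
    congr 1
    push_cast
    ring
  have hzn : z * z ^ (n - 1) = z ^ n := by rw [← zpow_one_add₀ hz, add_sub_cancel]
  rw [centeredQBinom_succ_left hx2 (pow_ne_zero 2 hx0), Function.comp, Equiv.subRight_apply]
  linear_combination centeredQBinom (x ^ 2) M N (n - 1) * (z ^ n * hexp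
    - x * (x ^ 2) ^ M * x ^ (n - 1) ^ 2 * hzn)

/-- A finite form of the triple product identity, due to MacMahon. -/
lemma hasSum_centeredQBinom (hx : ‖x‖ < 1) (hx0 : x ≠ 0) (hz : z ≠ 0) (M N : ℕ) :
    HasSum (fun n : ℤ => centeredQBinom (x ^ 2) M N n * (x ^ n ^ 2 * z ^ n))
      (qPochFin (-(x * z)) (x ^ 2) M * qPochFin (-(x / z)) (x ^ 2) N) := by
  induction M generalizing N with
  | zero =>
    -- The substitution `n ↦ -n`, `z ↦ z⁻¹` exchanges the roles of `M` and `N`.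
    rw [← (Equiv.neg ℤ).hasSum_iff]
    simp only [Function.comp_def, Equiv.neg_apply, centeredQBinom_neg, neg_sq, zpow_neg, ← inv_zpow]
    induction N with
    | zero =>
      convert hasSum_ite_eq (0 : ℤ) (1 : ℂ) using 2 with n
      · rcases eq_or_ne n 0 with rfl | hn
        · simp [centeredQBinom_zero_zero, zero_pow two_ne_zero]
        · simp [centeredQBinom_zero_zero, hn]
      · simp [qPochFin]
    | succ N ih =>
      rw [qPochFin_succ, ← mul_assoc]
      exact hasSum_centeredQBinom_succ_left hx hx0 (inv_ne_zero hz) ih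
  | succ M ih =>
    rw [qPochFin_succ, mul_right_comm]
    exact hasSum_centeredQBinom_succ_left hx hx0 hz (ih N)

lemma summable_pow_sq_mul_pow (hx : ‖x‖ < 1) (z : ℂ) :
    Summable fun n : ℕ => x ^ n ^ 2 * z ^ n := by
  rcases eq_or_ne x 0 with rfl | hx0
  · exact summable_of_ne_finset_zero (s := {0}) fun n hn => by simp_all
  rcases eq_or_ne z 0 with rfl | hz
  · exact summable_of_ne_finset_zero (s := {0}) fun n hn => by simp_all
  refine summable_of_ratio_test_tendsto_lt_one zero_lt_one
    (Eventually.of_forall fun n => by positivity) ?_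
  have hlim : Tendsto (fun n : ℕ => (‖x‖ * ‖z‖) * (‖x‖ ^ 2) ^ n) atTop (𝓝 0) := by
    simpa using (tendsto_pow_atTop_nhds_zero_of_lt_one (sq_nonneg ‖x‖)
      (pow_lt_one₀ (norm_nonneg x) hx two_ne_zero)).const_mul (‖x‖ * ‖z‖)
  refine hlim.congr fun n => ?_
  have : ‖x‖ ≠ 0 := norm_ne_zero_iff.mpr hx0
  have : ‖z‖ ≠ 0 := norm_ne_zero_iff.mpr hz
  simp only [norm_mul, norm_pow]
  field_simp
  ring

lemma summable_zpow_sq_mul_zpow (hx : ‖x‖ < 1) (z : ℂ) :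
    Summable fun n : ℤ => x ^ n ^ 2 * z ^ n := by
  refine Summable.of_nat_of_neg ?_ ?_
  · exact_mod_cast summable_pow_sq_mul_pow hx z
  · simp only [neg_sq, zpow_neg, ← inv_zpow]
    exact_mod_cast summable_pow_sq_mul_pow hx z⁻¹

lemma tsum_zpow_sq_mul_zpow (hx : ‖x‖ < 1) (z : ℂ) :
    ∑' n : ℤ, x ^ n ^ 2 * z ^ n
      = ∑' n : ℕ, (x ^ n ^ 2 * z ^ n + x ^ (n + 1) ^ 2 * z⁻¹ ^ (n + 1)) := by
  have hneg := (summable_nat_add_iff 1).mpr (summable_pow_sq_mul_pow hx z⁻¹)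
  rw [(summable_pow_sq_mul_pow hx z).tsum_add hneg, tsum_of_nat_of_neg_add_one]
  · simp only [neg_sq, zpow_neg, ← inv_zpow]
    norm_cast
  · exact_mod_cast summable_pow_sq_mul_pow hx z
  · simp only [neg_sq, zpow_neg, ← inv_zpow]
    exact_mod_cast hneg

lemma tendsto_centeredQBinom (hp : ‖p‖ < 1) (n : ℤ) :
    Tendsto (fun N : ℕ => centeredQBinom p N N n) atTop (𝓝 (qPochInf p p)⁻¹) := by
  have hfact : Tendsto (fun N : ℕ => qPochFin p p (N + N)) atTop (𝓝 (qPochInf p p)) :=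
    (tendsto_qPochFin hp p).comp (tendsto_id.atTop_add_atTop tendsto_id)
  have hsub : Tendsto (fun N : ℕ => qFactInv p (N - n)) atTop (𝓝 (qPochInf p p)⁻¹) :=
    (tendsto_qFactInv hp).comp (tendsto_atTop_add_const_right _ _ tendsto_natCast_atTop_atTop)
  have hadd : Tendsto (fun N : ℕ => qFactInv p (N + n)) atTop (𝓝 (qPochInf p p)⁻¹) :=
    (tendsto_qFactInv hp).comp (tendsto_atTop_add_const_right _ _ tendsto_natCast_atTop_atTop)
  simpa [centeredQBinom, qPochInf_ne_zero hp hp] using (hfact.mul hsub).mul hadd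

lemma exists_norm_centeredQBinom_le (hp : ‖p‖ < 1) :
    ∃ K : ℝ, ∀ (M N : ℕ) (n : ℤ), ‖centeredQBinom p M N n‖ ≤ K := by
  obtain ⟨L, hL⟩ := (tendsto_qPochFin hp p).norm.bddAbove_range
  obtain ⟨K, hK⟩ := exists_norm_qFactInv_le hp
  have hL0 : 0 ≤ L := (norm_nonneg _).trans (hL (Set.mem_range_self 0))
  have hK0 : 0 ≤ K := (norm_nonneg _).trans (hK 0)
  refine ⟨L * K * K, fun M N n => ?_⟩
  rw [centeredQBinom, norm_mul, norm_mul]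
  gcongr
  exacts [hL (Set.mem_range_self _), hK _, hK _]

theorem jacobi_triple_product (hx : ‖x‖ < 1) (hz : z ≠ 0) :
    ∑' n : ℤ, x ^ n ^ 2 * z ^ n
      = qPochInf (-(x * z)) (x ^ 2) * qPochInf (-(x / z)) (x ^ 2) * qPochInf (x ^ 2) (x ^ 2) := by
  rcases eq_or_ne x 0 with rfl | hx0
  · rw [tsum_eq_single 0 fun n hn => by simp [zero_zpow _ (pow_ne_zero 2 hn)]]
    simp [qPochInf]
  have hx2 := norm_sq_lt_one hx
  obtain ⟨K, hK⟩ := exists_norm_centeredQBinom_le hx2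
  have hsum : Tendsto (fun N : ℕ => qPochFin (-(x * z)) (x ^ 2) N * qPochFin (-(x / z)) (x ^ 2) N)
      atTop (𝓝 (∑' n : ℤ, (qPochInf (x ^ 2) (x ^ 2))⁻¹ * (x ^ n ^ 2 * z ^ n))) := by
    simp only [← (hasSum_centeredQBinom hx hx0 hz _ _).tsum_eq]
    refine tendsto_tsum_of_dominated_convergence ((summable_zpow_sq_mul_zpow hx z).norm.mul_left K)
      (fun n => (tendsto_centeredQBinom hx2 n).mul_const _) (Eventually.of_forall fun N n => ?_)
    rw [norm_mul]
    gcongr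
    exact hK N N n
  have hprod := (tendsto_qPochFin hx2 (-(x * z))).mul (tendsto_qPochFin hx2 (-(x / z)))
  rw [tendsto_nhds_unique hprod hsum, tsum_mul_left, mul_comm,
    mul_inv_cancel_left₀ (qPochInf_ne_zero hx2 hx2)]

theorem tsum_theta_eq_qPochInf {q : ℂ} (hq : ‖q‖ < 1) {b : ℕ} (hb : 0 < b) (c : ℕ) :
    ∑' n : ℕ, (-1) ^ n * q ^ (n * ((b + c) * n + c)) * (1 - q ^ (b * (2 * n + 1)))
      = qPochInf (q ^ b) (q ^ (2 * (b + c))) * qPochInf (q ^ (b + 2 * c)) (q ^ (2 * (b + c)))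
        * qPochInf (q ^ (2 * (b + c))) (q ^ (2 * (b + c))) := by
  rcases eq_or_ne q 0 with rfl | hq0
  · rw [tsum_eq_single 0 fun n hn => by simp [hn, hb.ne']]
    simp [qPochInf, hb.ne']
  have hx : ‖q ^ (b + c)‖ < 1 := by simpa using pow_lt_one₀ (norm_nonneg q) hq (by omega)
  have hz : -q ^ c ≠ 0 := neg_ne_zero.mpr (pow_ne_zero c hq0)
  have hprod₁ : -(q ^ (b + c) * -q ^ c) = q ^ (b + 2 * c) := by ring
  have hprod₂ : -(q ^ (b + c) / -q ^ c) = q ^ b := by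
    rw [div_neg, neg_neg, pow_add, mul_div_cancel_right₀ _ (pow_ne_zero c hq0)]
  rw [mul_comm 2, pow_mul q (b + c) 2, mul_comm (qPochInf (q ^ b) _), ← hprod₁, ← hprod₂,
    ← jacobi_triple_product hx hz, tsum_zpow_sq_mul_zpow hx]
  refine tsum_congr fun n => ?_
  have hpos : (q ^ (b + c)) ^ n ^ 2 * (-q ^ c) ^ n = (-1) ^ n * q ^ (n * ((b + c) * n + c)) := by
    rw [neg_pow]
    ring
  have hneg : (q ^ (b + c)) ^ (n + 1) ^ 2 * (-q ^ c)⁻¹ ^ (n + 1)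
      = -((-1) ^ n * q ^ (n * ((b + c) * n + c)) * q ^ (b * (2 * n + 1))) := by
    rw [inv_pow, ← div_eq_mul_inv, div_eq_iff (pow_ne_zero _ hz), neg_pow (q ^ c)]
    have hsign : ((-1 : ℂ) ^ n) * (-1) ^ n = 1 := by rw [← mul_pow]; simp
    linear_combination -q ^ ((b + c) * (n + 1) ^ 2) * hsign
  rw [hpos, hneg]
  ring

end JacobiTripleProduct

section AndrewsSeries

variable {q : ℂ}

/-- The quotient `(-q; q)_n / (q; q)_n`. -/
noncomputable def qRatio (q : ℂ) (n : ℕ) : ℂ := qPochFin (-q) q n / qPochFin q q n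

lemma qRatio_ne_zero (hq : ‖q‖ < 1) (n : ℕ) : qRatio q n ≠ 0 :=
  div_ne_zero (qPochFin_ne_zero hq (by rwa [norm_neg]) n) (qPochFin_ne_zero hq hq n)

lemma qRatio_succ_mul (hq : ‖q‖ < 1) (n : ℕ) :
    qRatio q (n + 1) * (1 - q ^ (n + 1)) = qRatio q n * (1 + q ^ (n + 1)) := by
  have hsub := one_sub_mul_pow_ne_zero hq hq n
  have hfact := qPochFin_ne_zero hq hq n
  rw [qRatio, qRatio, qPochFin_succ, qPochFin_succ, pow_succ']
  field_simp
  ring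

lemma tendsto_qRatio (hq : ‖q‖ < 1) :
    Tendsto (qRatio q) atTop (𝓝 (qPochInf (-q) q / qPochInf q q)) :=
  (tendsto_qPochFin hq _).div (tendsto_qPochFin hq _) (qPochInf_ne_zero hq hq)

lemma tendsto_inv_qRatio (hq : ‖q‖ < 1) :
    Tendsto (fun n => (qRatio q n)⁻¹) atTop (𝓝 (qPochInf (-q) q / qPochInf q q)⁻¹) :=
  (tendsto_qRatio hq).inv₀
    (div_ne_zero (qPochInf_ne_zero hq (by rwa [norm_neg])) (qPochInf_ne_zero hq hq))

lemma exists_norm_qRatio_div_le (hq : ‖q‖ < 1) :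
    ∃ K : ℝ, ∀ m n, ‖qRatio q m / qRatio q n‖ ≤ K := by
  obtain ⟨K, hK⟩ := (tendsto_qRatio hq).norm.bddAbove_range
  obtain ⟨L, hL⟩ := (tendsto_inv_qRatio hq).norm.bddAbove_range
  refine ⟨K * L, fun m n => ?_⟩
  rw [div_eq_mul_inv, norm_mul]
  exact mul_le_mul (hK ⟨m, rfl⟩) (hL ⟨n, rfl⟩) (norm_nonneg _)
    ((norm_nonneg _).trans (hK ⟨m, rfl⟩))

/-- The term of `andrewsSeries` with a free exponent `m` in the last factor. -/
noncomputable def andrewsTerm (q : ℂ) (k c j m n : ℕ) : ℂ :=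
  (-1) ^ n * q ^ (n * (k * n + k * j + c)) * (1 - q ^ m) * (qRatio q n / qRatio q (n + j))

/-- Andrews' series `H_{k,b}(-1/q; x; q)` at `k = b + c`, `x = q^{j+1}`, divided by
`(-q; q)_∞ / (q; q)_∞`. -/
noncomputable def andrewsSeries (q : ℂ) (j b c : ℕ) : ℂ :=
  ∑' n, andrewsTerm q (b + c) c j (b * (j + 1 + 2 * n)) n

lemma andrewsSeries_zero_left (q : ℂ) (j c : ℕ) : andrewsSeries q j 0 c = 0 := by
  simp [andrewsSeries, andrewsTerm]

lemma exists_norm_andrewsTerm_le (hq : ‖q‖ < 1) :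
    ∃ K : ℝ, ∀ k c j m n, ‖andrewsTerm q k c j m n‖ ≤ ‖q‖ ^ (n * (k * n + k * j + c)) * K := by
  obtain ⟨K, hK⟩ := exists_norm_qRatio_div_le hq
  refine ⟨2 * K, fun k c j m n => ?_⟩
  have hsub : ‖1 - q ^ m‖ ≤ 2 := by
    have hpow : ‖q ^ m‖ ≤ 1 := by
      rw [norm_pow]
      exact pow_le_one₀ (norm_nonneg _) hq.le
    calc ‖1 - q ^ m‖ ≤ ‖(1 : ℂ)‖ + ‖q ^ m‖ := norm_sub_le _ _
      _ ≤ 2 := by rw [norm_one]; linarith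
  rw [andrewsTerm, norm_mul, norm_mul, norm_mul, norm_pow, norm_neg, norm_one, one_pow, one_mul,
    norm_pow, mul_assoc]
  gcongr
  exact hK n (n + j)

lemma le_andrewsTerm_exponent {k : ℕ} (hk : 0 < k) (c j n : ℕ) :
    n ≤ n * (k * n + k * j + c) := by
  rcases n.eq_zero_or_pos with rfl | hn
  · simp
  · exact Nat.le_mul_of_pos_right _ (by positivity)

lemma exists_norm_andrewsTerm_le_geometric (hq : ‖q‖ < 1) :
    ∃ K : ℝ, ∀ {k : ℕ}, 0 < k → ∀ c j m n, ‖andrewsTerm q k c j m n‖ ≤ ‖q‖ ^ n * K := by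
  obtain ⟨K, hK⟩ := exists_norm_andrewsTerm_le hq
  have hK0 : 0 ≤ K := by simpa using (norm_nonneg _).trans (hK 0 0 0 0 0)
  refine ⟨K, fun hk c j m n => (hK _ c j m n).trans ?_⟩
  exact mul_le_mul_of_nonneg_right
    (pow_le_pow_of_le_one (norm_nonneg _) hq.le (le_andrewsTerm_exponent hk c j n)) hK0

lemma summable_andrewsTerm (hq : ‖q‖ < 1) {k : ℕ} (hk : 0 < k) (c j : ℕ) (m : ℕ → ℕ) :
    Summable fun n => andrewsTerm q k c j (m n) n := by
  obtain ⟨K, hK⟩ := exists_norm_andrewsTerm_le_geometric hq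
  exact .of_norm_bounded ((summable_geometric_of_lt_one (norm_nonneg q) hq).mul_right K)
    fun n => hK hk c j _ n

lemma andrewsTerm_sub (hq : ‖q‖ < 1) (j b c n : ℕ) :
    andrewsTerm q (b + 1 + c) c j ((b + 1) * (j + 1 + 2 * n)) n
        - andrewsTerm q (b + (c + 1)) (c + 1) j (b * (j + 1 + 2 * n)) n
      = (q ^ (j + 1)) ^ b
          * (andrewsTerm q (c + 1 + b) b (j + 1) ((c + 1) * (j + 1 + 1 + 2 * n)) n
            + q ^ (j + 1) * andrewsTerm q (c + (b + 1)) (b + 1) (j + 1) (c * (j + 1 + 1 + 2 * n)) n)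
        + (andrewsTerm q (b + 1 + c) c j n n - andrewsTerm q (b + 1 + c) c j (n + 1) (n + 1)) := by
  have hne := qRatio_ne_zero hq (n + j)
  have hne' := qRatio_ne_zero hq (n + j + 1)
  have hnum : qRatio q (n + 1) / qRatio q (n + 1 + j) * (1 - q ^ (n + 1))
      = qRatio q n / qRatio q (n + j + 1) * (1 + q ^ (n + 1)) := by
    rw [div_mul_eq_mul_div, qRatio_succ_mul hq, Nat.add_right_comm, div_mul_eq_mul_div]
  have hden : qRatio q n / qRatio q (n + j) * (1 - q ^ (n + j + 1))
      = qRatio q n / qRatio q (n + j + 1) * (1 + q ^ (n + j + 1)) := by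
    rw [div_mul_eq_mul_div, div_mul_eq_mul_div, div_eq_div_iff hne hne']
    linear_combination qRatio q n * qRatio_succ_mul hq (n + j)
  simp only [andrewsTerm]
  linear_combination
    (-1) ^ n * q ^ (n * ((b + 1 + c) * n + (b + 1 + c) * j + c))
        * q ^ ((j + 1) * b + n * (2 * b + 1)) * hden
      - (-1) ^ n * q ^ ((n + 1) * ((b + 1 + c) * (n + 1) + (b + 1 + c) * j + c)) * hnum

lemma andrewsSeries_sub (hq : ‖q‖ < 1) (j b c : ℕ) :
    andrewsSeries q j (b + 1) c - andrewsSeries q j b (c + 1)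
      = (q ^ (j + 1)) ^ b * (andrewsSeries q (j + 1) (c + 1) b
        + q ^ (j + 1) * andrewsSeries q (j + 1) c (b + 1)) := by
  have hsum {k : ℕ} (hk : 0 < k) := summable_andrewsTerm hq hk
  have hα := hsum (k := b + 1 + c) (by omega) c j fun n => n
  have telescope : ∑' n, (andrewsTerm q (b + 1 + c) c j n n
      - andrewsTerm q (b + 1 + c) c j (n + 1) (n + 1)) = 0 := by
    rw [hα.tsum_sub ((summable_nat_add_iff 1).mpr hα), hα.tsum_eq_zero_add]
    simp [andrewsTerm]
  rw [andrewsSeries, andrewsSeries, andrewsSeries, andrewsSeries,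
    ← (hsum (by omega) _ _ _).tsum_sub (hsum (by omega) _ _ _), ← tsum_mul_left,
    ← (hsum (by omega) _ _ _).tsum_add ((hsum (by omega) _ _ _).mul_left _), ← tsum_mul_left]
  simp only [andrewsTerm_sub hq]
  rw [Summable.tsum_add _ (hα.sub ((summable_nat_add_iff 1).mpr hα)), telescope, add_zero]
  exact ((hsum (by omega) _ _ _).add ((hsum (by omega) _ _ _).mul_left _)).mul_left _

lemma tendsto_andrewsTerm_zero (hq : ‖q‖ < 1) {b : ℕ} (hb : 0 < b) (k c : ℕ) :
    Tendsto (fun j => andrewsTerm q k c j (b * (j + 1)) 0) atTop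
      (𝓝 (qPochInf (-q) q / qPochInf q q)⁻¹) := by
  have hpow : Tendsto (fun j => q ^ (b * (j + 1))) atTop (𝓝 0) := by
    simp only [pow_mul]
    have hqb : ‖q ^ b‖ < 1 := by simpa using pow_lt_one₀ (norm_nonneg q) hq hb.ne'
    exact (tendsto_pow_atTop_nhds_zero_of_norm_lt_one hqb).comp (tendsto_add_atTop_nat 1)
  simpa [andrewsTerm, qRatio, qPochFin] using (hpow.const_sub 1).mul (tendsto_inv_qRatio hq)

lemma tendsto_andrewsTerm_succ (hq : ‖q‖ < 1) {k : ℕ} (hk : 0 < k) (c n : ℕ) (m : ℕ → ℕ) :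
    Tendsto (fun j => andrewsTerm q k c j (m j) (n + 1)) atTop (𝓝 0) := by
  obtain ⟨K, hK⟩ := exists_norm_andrewsTerm_le hq
  have hexp : Tendsto (fun j => (n + 1) * (k * (n + 1) + k * j + c)) atTop atTop :=
    tendsto_atTop_mono (fun j => calc
      j ≤ k * j := Nat.le_mul_of_pos_left j hk
      _ ≤ k * (n + 1) + k * j + c := by omega
      _ ≤ (n + 1) * (k * (n + 1) + k * j + c) := Nat.le_mul_of_pos_left _ n.succ_pos) tendsto_id
  refine squeeze_zero_norm (fun j => hK k c j (m j) (n + 1)) ?_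
  simpa using
    ((tendsto_pow_atTop_nhds_zero_of_lt_one (norm_nonneg q) hq).comp hexp).mul_const K

lemma tendsto_andrewsSeries (hq : ‖q‖ < 1) {b : ℕ} (hb : 0 < b) (c : ℕ) :
    Tendsto (fun j => andrewsSeries q j b c) atTop (𝓝 (qPochInf (-q) q / qPochInf q q)⁻¹) := by
  obtain ⟨K, hK⟩ := exists_norm_andrewsTerm_le_geometric hq
  rw [← tsum_ite_eq (0 : ℕ) (fun _ => (qPochInf (-q) q / qPochInf q q)⁻¹)]
  refine tendsto_tsum_of_dominated_convergence
    ((summable_geometric_of_lt_one (norm_nonneg q) hq).mul_right K) (fun n => ?_)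
    (Eventually.of_forall fun j n => hK (by omega) c j _ n)
  rcases n with _ | n
  · exact tendsto_andrewsTerm_zero hq hb _ c
  · exact tendsto_andrewsTerm_succ hq (by omega) c n _

lemma andrewsSeries_level_zero (hq : ‖q‖ < 1) {b : ℕ} (hb : 0 < b) (c : ℕ) :
    andrewsSeries q 0 b c
      = qPochInf (q ^ b) (q ^ (2 * (b + c))) * qPochInf (q ^ (b + 2 * c)) (q ^ (2 * (b + c)))
        * qPochInf (q ^ (2 * (b + c))) (q ^ (2 * (b + c))) := by
  rw [← tsum_theta_eq_qPochInf hq hb c]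
  refine tsum_congr fun n => ?_
  rw [andrewsTerm, add_zero, div_self (qRatio_ne_zero hq n), mul_one, mul_zero, add_zero, zero_add,
    add_comm 1]

end AndrewsSeries

section GordonSystem

open Finset.HasAntidiagonal (antidiagonal mem_antidiagonal)

lemma nonpos_of_le_one_add_mul_succ {u a : ℕ → ℝ} (ha : ∀ j, 0 ≤ a j) (hsum : Summable a)
    (hu : Tendsto u atTop (𝓝 0)) (hle : ∀ j, u j ≤ (1 + a j) * u (j + 1)) (j : ℕ) : u j ≤ 0 := by
  set P : ℕ → ℝ := fun n => ∏ i ∈ Finset.range n, (1 + a i)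
  have hsucc (n : ℕ) : P (n + 1) = P n * (1 + a n) := Finset.prod_range_succ _ n
  have hpos (n : ℕ) : 0 < P n := Finset.prod_pos fun i _ => by linarith [ha i]
  have hmono : Monotone fun n => P n * u n := monotone_nat_of_le_succ fun n => by
    rw [hsucc, mul_assoc]
    exact mul_le_mul_of_nonneg_left (hle n) (hpos n).le
  have hlim : Tendsto (fun n => P n * u n) atTop (𝓝 0) := by
    simpa using (Real.multipliable_one_add_of_summable hsum).hasProd.tendsto_prod_nat.mul hu
  exact nonpos_of_mul_nonpos_right (hmono.ge_of_tendsto hlim j) (hpos j)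

variable {𝕜 : Type*} [NormedField 𝕜] {z : ℕ → 𝕜} {F G : ℕ → ℕ → ℕ → 𝕜} {L M : 𝕜}

/-- The `q`-difference system behind Gordon-type identities. The number `F j b c` is the value at
level `j` (in the classical case, at `x = q ^ j`) of the `b`-th of the `b + c + 1` functions in
play, the last index being kept as `c` to avoid subtraction. -/
structure IsGordonSystem (z : ℕ → 𝕜) (F : ℕ → ℕ → ℕ → 𝕜) (L : 𝕜) : Prop where
  zero_left : ∀ j c, F j 0 c = 0
  succ_sub : ∀ j b c, F j (b + 1) c - F j b (c + 1)
    = z j ^ b * (F (j + 1) (c + 1) b + z j * F (j + 1) c (b + 1))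
  tendsto : ∀ b c, 0 < b → Tendsto (fun j => F j b c) atTop (𝓝 L)

namespace IsGordonSystem

lemma sub (hF : IsGordonSystem z F L) (hG : IsGordonSystem z G M) :
    IsGordonSystem z (F - G) (L - M) where
  zero_left j c := by simp [hF.zero_left, hG.zero_left]
  succ_sub j b c := by
    simp only [Pi.sub_apply]
    linear_combination hF.succ_sub j b c - hG.succ_sub j b c
  tendsto b c hb := (hF.tendsto b c hb).sub (hG.tendsto b c hb)

lemma const_mul (hF : IsGordonSystem z F L) (a : 𝕜) :
    IsGordonSystem z (fun j b c => a * F j b c) (a * L) where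
  zero_left j c := by rw [hF.zero_left, mul_zero]
  succ_sub j b c := by linear_combination a * hF.succ_sub j b c
  tendsto b c hb := (hF.tendsto b c hb).const_mul a

lemma norm_succ_sub_le (hF : IsGordonSystem z F L) {j b c : ℕ} {m : ℝ}
    (hm : ∀ b' c', b' + c' = b + 1 + c → ‖F (j + 1) b' c'‖ ≤ m) :
    ‖F j (b + 1) c - F j b (c + 1)‖ ≤ ‖z j‖ ^ b * ((1 + ‖z j‖) * m) := by
  rw [hF.succ_sub, norm_mul, norm_pow]
  gcongr
  calc ‖F (j + 1) (c + 1) b + z j * F (j + 1) c (b + 1)‖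
      ≤ ‖F (j + 1) (c + 1) b‖ + ‖z j‖ * ‖F (j + 1) c (b + 1)‖ :=
        (norm_add_le _ _).trans_eq (by rw [norm_mul])
    _ ≤ m + ‖z j‖ * m := by
        gcongr
        exacts [hm _ _ (by ring), hm _ _ (by ring)]
    _ = (1 + ‖z j‖) * m := by ring

lemma norm_le (hF : IsGordonSystem z F L) {j k : ℕ} (hz : ‖z j‖ ≤ 1) {m : ℝ}
    (hm : ∀ b c, b + c = k → ‖F (j + 1) b c‖ ≤ m) (b c : ℕ) (hk : b + c = k) :
    ‖F j b c‖ ≤ (1 + 2 * b * ‖z j‖) * m := by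
  have hm0 : 0 ≤ m := (norm_nonneg _).trans (hm b c hk)
  induction b generalizing c with
  | zero => simpa [hF.zero_left] using hm0
  | succ b ih =>
    have hdiff := hF.norm_succ_sub_le (hk ▸ hm)
    rcases b.eq_zero_or_pos with rfl | hb
    · rw [hF.zero_left, sub_zero, pow_zero, one_mul] at hdiff
      refine hdiff.trans ?_
      gcongr
      push_cast
      linarith [norm_nonneg (z j)]
    · calc ‖F j (b + 1) c‖ ≤ ‖F j b (c + 1)‖ + ‖F j (b + 1) c - F j b (c + 1)‖ :=
            norm_le_norm_add_norm_sub' _ _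
        _ ≤ (1 + 2 * b * ‖z j‖) * m + ‖z j‖ * ((1 + 1) * m) := by
            gcongr
            · exact ih (c + 1) (by omega)
            · refine hdiff.trans ?_
              gcongr
              exact pow_le_of_le_one (norm_nonneg _) hz hb.ne'
        _ = (1 + 2 * (b + 1 : ℕ) * ‖z j‖) * m := by
            push_cast
            ring

lemma eq_zero (hF : IsGordonSystem z F 0) (hz : ∀ j, ‖z j‖ ≤ 1) (hsum : Summable fun j => ‖z j‖) :
    F = 0 := by
  ext j b c
  set V : (j : ℕ) → antidiagonal (b + c) → 𝕜 := fun j x => F j x.1.1 x.1.2 with hV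
  have hstep (j : ℕ) : ‖V j‖ ≤ (1 + 2 * (b + c : ℕ) * ‖z j‖) * ‖V (j + 1)‖ := by
    refine (pi_norm_le_iff_of_nonneg (by positivity)).mpr fun x => ?_
    have hx := mem_antidiagonal.mp x.2
    refine (hF.norm_le (hz j) (fun b' c' h =>
      norm_le_pi_norm (V (j + 1)) ⟨(b', c'), mem_antidiagonal.mpr h⟩) _ _ hx).trans ?_
    gcongr
    omega
  have hlim : Tendsto (fun j => ‖V j‖) atTop (𝓝 0) := by
    rw [← tendsto_zero_iff_norm_tendsto_zero, tendsto_pi_nhds]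
    rintro ⟨⟨_ | b', c'⟩, -⟩
    · simp only [hV, hF.zero_left, Pi.zero_apply, tendsto_const_nhds]
    · exact hF.tendsto _ _ b'.succ_pos
  have hV0 := nonpos_of_le_one_add_mul_succ (fun j => by positivity) (hsum.mul_left _) hlim hstep j
  exact congrFun (norm_le_zero_iff.mp hV0) ⟨(b, c), mem_antidiagonal.mpr rfl⟩

theorem unique (hF : IsGordonSystem z F L) (hG : IsGordonSystem z G L) (hz : ∀ j, ‖z j‖ ≤ 1)
    (hsum : Summable fun j => ‖z j‖) : F = G :=
  sub_eq_zero.mp <| eq_zero (sub_self L ▸ hF.sub hG) hz hsum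

end IsGordonSystem

end GordonSystem

section Summation

lemma summable_finsuppProd {ι M : Type*} [Zero M] {c : ι → M → ℝ} (hc : ∀ i v, 0 ≤ c i v)
    (hsum : Summable fun x : ι × M => c x.1 x.2) : Summable fun f : ι →₀ M => f.prod c := by
  refine ((summable_finsetProd_of_summable_nonneg (fun x => hc x.1 x.2) hsum).comp_injective
    (Finsupp.graph_injective ι M)).congr fun f => ?_
  rw [Function.comp_apply, Finsupp.graph, Finset.prod_map]
  rfl

lemma tsum_ncard_fiber_mul {α β R : Type*} [NormedRing R] [CompleteSpace R] {S : Set α}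
    (g : α → β) (φ : β → R)
    (hsum : Summable fun p : S => φ (g p)) :
    ∑' b, ((S ∩ {p | g p = b}).ncard : R) * φ b = ∑' p : S, φ (g p) := by
  rw [← (hsum.hasSum.tsum_fiberwise fun p => g p).tsum_eq]
  refine tsum_congr fun b => ?_
  have hcard : (S ∩ {p | g p = b}).ncard = ((fun p : S => g p) ⁻¹' {b}).ncard := by
    rw [← Set.ncard_image_of_injective _ Subtype.val_injective]
    congr 1
    exact (Subtype.image_preimage_coe S {p | g p = b}).symm
  have hconst (p : (fun p : S => g p) ⁻¹' {b}) : φ (g p) = φ b := congrArg φ p.2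
  rw [hcard]
  simp only [hconst, tsum_const, nsmul_eq_mul]
  rfl

end Summation

section Overpartitions

/-- The pair of multiplicity functions (plain, overlined) recording an overpartition. -/
abbrev MultPair := (ℕ →₀ ℕ) × (ℕ →₀ ℕ)

/-- The numbers of plain and of overlined occurrences of the part `i`. -/
def mult (p : MultPair) (i : ℕ) : ℕ × ℕ := (p.1 i, p.2 i)

/-- The multiplicities `x` allowed by the conditions of the theorem for the part `i` when the part
`i - 1` occurs `s` times in all. -/
def admissible (k i s : ℕ) : Finset (ℕ × ℕ) :=
  {x ∈ Finset.range (2 * k + 1) ×ˢ Finset.range 2 |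
    (Odd i → x.2 ≤ x.1) ∧ (Even i → Even (x.1 + x.2)) ∧ s + x.1 + 1 ≤ 2 * k + x.2}

lemma mem_admissible {k i s : ℕ} {x : ℕ × ℕ} : x ∈ admissible k i s ↔
    x.2 ≤ 1 ∧ (Odd i → x.2 ≤ x.1) ∧ (Even i → Even (x.1 + x.2)) ∧ s + x.1 + 1 ≤ 2 * k + x.2 := by
  simp only [admissible, Finset.mem_filter, Finset.mem_product, Finset.mem_range]
  exact ⟨fun ⟨⟨_, _⟩, h⟩ => ⟨by omega, h⟩, fun ⟨_, h⟩ => ⟨by have := h.2.2; omega, h⟩⟩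

lemma admissible_two_mul_self (k i : ℕ) : admissible k i (2 * k) = ∅ := by
  refine Finset.eq_empty_of_forall_notMem fun x hx => ?_
  obtain ⟨hle, hodd, heven, hadj⟩ := mem_admissible.mp hx
  rcases i.even_or_odd with hi | hi
  · have := Nat.even_iff.mp (heven hi)
    omega
  · have := hodd hi
    omega

lemma admissible_two_mul_add_one {i : ℕ} (hi : Even i) (k c : ℕ) :
    admissible k i (2 * c + 1) = admissible k i (2 * c) := by
  ext x
  simp only [mem_admissible, hi, true_implies, Nat.even_iff]
  omega

/-- The multiplicities of the part `i` excluded from `admissible k i s` when `s` increases from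
`2 * c` to `2 * (c + 1)`, for `k = b + 1 + c`. -/
def boundaryMult (i b : ℕ) : Finset (ℕ × ℕ) :=
  if Even i then {(2 * b, 0), (2 * b + 1, 1)}
  else {(2 * b, 0), (2 * b + 1, 0), (2 * b + 1, 1), (2 * b + 2, 1)}

lemma admissible_eq_union (i b c : ℕ) :
    admissible (b + 1 + c) i (2 * c)
      = admissible (b + 1 + c) i (2 * (c + 1)) ∪ boundaryMult i b := by
  ext ⟨f, g⟩
  rcases i.even_or_odd with hi | hi
  · have hi' := Nat.not_odd_iff_even.mpr hi
    simp only [mem_admissible, boundaryMult, hi, hi', Nat.even_iff, Finset.mem_union,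
      Finset.mem_insert, Finset.mem_singleton, Prod.mk.injEq, if_true, false_implies, true_implies,
      true_and]
    omega
  · have hi' := Nat.not_even_iff_odd.mpr hi
    simp only [mem_admissible, boundaryMult, hi, hi', Finset.mem_union, Finset.mem_insert,
      Finset.mem_singleton, Prod.mk.injEq, if_false, false_implies, true_implies,
      true_and]
    omega

lemma disjoint_admissible_boundaryMult (i b c : ℕ) :
    Disjoint (admissible (b + 1 + c) i (2 * (c + 1))) (boundaryMult i b) := by
  refine Finset.disjoint_left.mpr fun x hx hx' => ?_
  have hadj := (mem_admissible.mp hx).2.2.2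
  rw [boundaryMult] at hx'
  split_ifs at hx' <;>
    simp only [Finset.mem_insert, Finset.mem_singleton, Prod.ext_iff] at hx' <;> omega

/-- The overpartitions without parts `≤ j` satisfying the conditions of the theorem on the parts
`> j`, the condition linking the parts `j` and `j + 1` being the one for `s` occurrences of `j`. -/
def tailSet (k j s : ℕ) : Set MultPair :=
  {p | (∀ i ≤ j, mult p i = 0) ∧ mult p (j + 1) ∈ admissible k (j + 1) s ∧
    ∀ i, j < i → mult p (i + 1) ∈ admissible k (i + 1) ((mult p i).1 + (mult p i).2)}

lemma setOf_isOverPtn_and_uCond {k a : ℕ} (hak : a ≤ k) :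
    {p | IsOverPtn p ∧ uCond 2 (2 * k) (2 * a) p} = tailSet k 0 (2 * (k - a)) := by
  ext p
  simp only [Set.mem_ofPred_eq, IsOverPtn, uCond, tailSet, mem_admissible, mult, nonpos_iff_eq_zero,
    forall_eq, Prod.mk_eq_zero, Nat.add_one_sub_one, one_mul, zero_add]
  constructor
  · rintro ⟨⟨hf, hg, hle⟩, hfirst, hodd, heven, hadj⟩
    have hodd' (i : ℕ) (hi : Odd i) : p.2 i ≤ p.1 i := by
      obtain ⟨l, rfl⟩ := hi
      exact hodd l
    have heven' (i : ℕ) (hi : Even (i + 1)) : Even (p.1 (i + 1) + p.2 (i + 1)) := by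
      obtain ⟨l, rfl⟩ := Nat.not_even_iff_odd.mp (Nat.even_add_one.mp hi)
      exact even_iff_two_dvd.mpr (heven l)
    exact ⟨⟨hf, hg⟩, ⟨hle _, hodd' _, heven' 0, by omega⟩,
      fun i hi => ⟨hle _, hodd' _, heven' i, hadj i hi⟩⟩
  · rintro ⟨⟨hf, hg⟩, hfirst, hrest⟩
    have hpart (i : ℕ) : p.2 (i + 1) ≤ 1 ∧ (Odd (i + 1) → p.2 (i + 1) ≤ p.1 (i + 1)) ∧
        (Even (i + 1) → Even (p.1 (i + 1) + p.2 (i + 1))) := by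
      rcases i.eq_zero_or_pos with rfl | hi
      · exact ⟨hfirst.1, hfirst.2.1, hfirst.2.2.1⟩
      · exact ⟨(hrest i hi).1, (hrest i hi).2.1, (hrest i hi).2.2.1⟩
    refine ⟨⟨hf, hg, ?_⟩, by omega, fun l => (hpart (2 * l)).2.1 (by simp), fun l => ?_,
      fun l hl => (hrest l hl).2.2.2⟩
    · rintro (_ | i)
      · omega
      · exact (hpart i).1
    · exact even_iff_two_dvd.mp ((hpart (2 * l + 1)).2.2 (by simp [Nat.even_add_one]))

/-- Add `x.1` plain and `x.2` overlined occurrences of the part `i`. -/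
noncomputable def addPart (i : ℕ) (x : ℕ × ℕ) (p : MultPair) : MultPair :=
  p + (Finsupp.single i x.1, Finsupp.single i x.2)

lemma addPart_injective (i : ℕ) (x : ℕ × ℕ) : Function.Injective (addPart i x) :=
  add_left_injective _

lemma mult_addPart_self {i : ℕ} {p : MultPair} (hp : mult p i = 0) (x : ℕ × ℕ) :
    mult (addPart i x p) i = x := by
  obtain ⟨hf, hg⟩ := Prod.mk_eq_zero.mp hp
  simp [mult, addPart, hf, hg]

lemma mult_addPart_of_ne {i l : ℕ} (h : l ≠ i) (x : ℕ × ℕ) (p : MultPair) :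
    mult (addPart i x p) l = mult p l := by
  simp [mult, addPart, Finsupp.single_eq_of_ne h]

lemma exists_eq_addPart (i : ℕ) (p : MultPair) :
    ∃ p', mult p' i = 0 ∧ addPart i (mult p i) p' = p :=
  ⟨(p.1.erase i, p.2.erase i), by simp [mult],
    Prod.ext (Finsupp.erase_add_single _ _) (Finsupp.erase_add_single _ _)⟩

lemma opWt_addPart (i : ℕ) (x : ℕ × ℕ) (p : MultPair) :
    opWt (addPart i x p) = i * (x.1 + x.2) + opWt p := by
  have hadd (u v : ℕ →₀ ℕ) : (u + v).sum (fun i v => i * v)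
      = u.sum (fun i v => i * v) + v.sum (fun i v => i * v) :=
    Finsupp.sum_add_index' mul_zero mul_add
  simp only [opWt, addPart, Prod.fst_add, Prod.snd_add, hadd]
  rw [Finsupp.sum_single_index (mul_zero _), Finsupp.sum_single_index (mul_zero _)]
  ring

lemma addPart_mem_tailSet_iff {k j s : ℕ} {x : ℕ × ℕ} {p : MultPair} (hp : mult p (j + 1) = 0) :
    addPart (j + 1) x p ∈ tailSet k j s
      ↔ x ∈ admissible k (j + 1) s ∧ p ∈ tailSet k (j + 1) (x.1 + x.2) := by
  have hself := mult_addPart_self hp x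
  have hne {l : ℕ} (h : l ≠ j + 1) := mult_addPart_of_ne h x p
  constructor
  · rintro ⟨hzero, hfirst, hrest⟩
    refine ⟨hself ▸ hfirst, fun i hi => ?_, ?_, fun i hi => ?_⟩
    · rcases hi.eq_or_lt with rfl | hi
      · exact hp
      · exact hne hi.ne ▸ hzero i (by omega)
    · simpa only [hself, hne (show j + 1 + 1 ≠ j + 1 by omega)] using hrest (j + 1) (by omega)
    · simpa only [hne hi.ne', hne (show i + 1 ≠ j + 1 by omega)] using hrest i (by omega)
  · rintro ⟨hx, hzero, hfirst, hrest⟩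
    refine ⟨fun i hi => ?_, hself.symm ▸ hx, fun i hi => ?_⟩
    · rw [hne (by omega), hzero i (by omega)]
    · rw [hne (show i + 1 ≠ j + 1 by omega)]
      rcases (Nat.succ_le_of_lt hi).eq_or_lt with rfl | hi
      · rwa [hself]
      · rw [hne hi.ne']
        exact hrest i hi

lemma tailSet_eq_biUnion (k j s : ℕ) :
    tailSet k j s
      = ⋃ x ∈ admissible k (j + 1) s, addPart (j + 1) x '' tailSet k (j + 1) (x.1 + x.2) := by
  ext p
  simp only [Set.mem_iUnion₂, Set.mem_image]
  constructor
  · intro hp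
    obtain ⟨p', hp', h⟩ := exists_eq_addPart (j + 1) p
    obtain ⟨hx, hmem⟩ := (addPart_mem_tailSet_iff hp').mp (h.symm ▸ hp)
    exact ⟨_, hx, p', hmem, h⟩
  · rintro ⟨x, hx, p, hp, rfl⟩
    exact (addPart_mem_tailSet_iff (hp.1 _ le_rfl)).mpr ⟨hx, hp⟩

lemma pairwise_disjoint_addPart_image (k j : ℕ) :
    Pairwise (Function.onFun Disjoint
      fun x : ℕ × ℕ => addPart (j + 1) x '' tailSet k (j + 1) (x.1 + x.2)) := by
  refine fun x y hxy => Set.disjoint_left.mpr ?_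
  rintro _ ⟨p, hp, rfl⟩ ⟨p', hp', h⟩
  refine hxy ?_
  rw [← mult_addPart_self (hp.1 _ le_rfl) x, ← h, mult_addPart_self (hp'.1 _ le_rfl)]

lemma summable_pow_finsuppSum {r : ℝ} (hr0 : 0 ≤ r) (hr : r < 1) :
    Summable fun f : {f : ℕ →₀ ℕ // f 0 = 0} => r ^ f.1.sum fun i v => i * v := by
  set c : ℕ → ℕ → ℝ := fun i v => if i = 0 ∨ v = 0 then 0 else r ^ (i * v) with hc
  have hsum : Summable fun x : ℕ × ℕ => c x.1 x.2 := by
    refine (PNat.coe_injective.prodMap PNat.coe_injective |>.summable_iff ?_).mp ?_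
    · rintro ⟨i, v⟩ h
      refine if_pos ?_
      contrapose! h
      exact ⟨(⟨i, Nat.pos_of_ne_zero h.1⟩, ⟨v, Nat.pos_of_ne_zero h.2⟩), rfl⟩
    · simpa [Function.comp_def, hc] using
        summable_prod_mul_pow 0 (by rwa [Real.norm_of_nonneg hr0] : ‖r‖ < 1)
  have hprod := summable_finsuppProd (fun i v => by rw [hc]; positivity) hsum
  refine (hprod.comp_injective Subtype.val_injective).congr fun f => ?_
  rw [Function.comp_apply, Finsupp.prod, Finsupp.sum, ← Finset.prod_pow_eq_pow_sum]
  refine Finset.prod_congr rfl fun i hi => if_neg ?_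
  rw [Finsupp.mem_support_iff] at hi
  rintro (rfl | hv)
  exacts [hi f.2, hi hv]

variable {q : ℂ}

lemma summable_norm_pow_opWt (hq : ‖q‖ < 1) :
    Summable fun p : {p : MultPair | mult p 0 = 0} => ‖q‖ ^ opWt p := by
  have hsum := summable_pow_finsuppSum (norm_nonneg q) hq
  have hmul := hsum.mul_of_nonneg hsum (fun _ => by positivity) fun _ => by positivity
  let e : {p : MultPair | mult p 0 = 0} → {f : ℕ →₀ ℕ // f 0 = 0} × {f : ℕ →₀ ℕ // f 0 = 0} :=
    fun p => (⟨p.1.1, (Prod.mk_eq_zero.mp p.2).1⟩, ⟨p.1.2, (Prod.mk_eq_zero.mp p.2).2⟩)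
  have he : Function.Injective e := fun p p' h => by
    simpa only [e, Prod.mk.injEq, Subtype.mk.injEq, ← Prod.ext_iff, ← Subtype.ext_iff] using h
  simpa only [Function.comp_def, e, opWt, pow_add] using hmul.comp_injective he

lemma summable_pow_opWt (hq : ‖q‖ < 1) {S : Set MultPair} (hS : S ⊆ {p | mult p 0 = 0}) :
    Summable fun p : S => q ^ opWt p := by
  have hnorm := (summable_norm_pow_opWt hq).comp_injective (Set.inclusion_injective hS)
  refine .of_norm ?_
  simp only [norm_pow]
  exact hnorm

lemma tailSet_subset (k j s : ℕ) : tailSet k j s ⊆ {p | mult p 0 = 0} :=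
  fun _ hp => hp.1 0 j.zero_le

/-- The generating function of `tailSet k j s` by weight. -/
noncomputable def tailGf (q : ℂ) (k j s : ℕ) : ℂ :=
  ∑' p : tailSet k j s, q ^ opWt p

lemma tsum_addPart_image (q : ℂ) (i : ℕ) (x : ℕ × ℕ) (S : Set MultPair) :
    ∑' p : addPart i x '' S, q ^ opWt p = q ^ (i * (x.1 + x.2)) * ∑' p : S, q ^ opWt p := by
  rw [tsum_image (fun p => q ^ opWt p) (addPart_injective i x).injOn, ← tsum_mul_left]
  simp only [opWt_addPart, pow_add]

lemma tailGf_eq_sum (hq : ‖q‖ < 1) (k j s : ℕ) :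
    tailGf q k j s = ∑ x ∈ admissible k (j + 1) s,
      q ^ ((j + 1) * (x.1 + x.2)) * tailGf q k (j + 1) (x.1 + x.2) := by
  have hsum (x : ℕ × ℕ) (hx : x ∈ admissible k (j + 1) s) :
      Summable fun p : addPart (j + 1) x '' tailSet k (j + 1) (x.1 + x.2) => q ^ opWt p := by
    have hsub := (Set.subset_biUnion_of_mem (u := fun x : ℕ × ℕ =>
      addPart (j + 1) x '' tailSet k (j + 1) (x.1 + x.2)) hx).trans (tailSet_eq_biUnion k j s).ge
    exact summable_pow_opWt hq (hsub.trans (tailSet_subset k j s))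
  rw [tailGf, tailSet_eq_biUnion, Summable.tsum_finset_bUnion_disjoint (f := fun p => q ^ opWt p)
    ((pairwise_disjoint_addPart_image k j).set_pairwise _) hsum]
  simp only [tsum_addPart_image, tailGf]

lemma tailGf_two_mul_self (hq : ‖q‖ < 1) (k j : ℕ) : tailGf q k j (2 * k) = 0 := by
  rw [tailGf_eq_sum hq, admissible_two_mul_self, Finset.sum_empty]

lemma tailGf_two_mul_add_one (hq : ‖q‖ < 1) {j : ℕ} (hj : Odd j) (k c : ℕ) :
    tailGf q k j (2 * c + 1) = tailGf q k j (2 * c) := by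
  rw [tailGf_eq_sum hq, tailGf_eq_sum hq, admissible_two_mul_add_one hj.add_one]

/-- The factor of `(-q; q²)_∞` contributed by the part `i`; dividing it out at every level turns
`tailGf` into a Gordon system. -/
noncomputable def oddPartFactor (q : ℂ) (i : ℕ) : ℂ := if Odd i then 1 + q ^ i else 1

lemma tailGf_sub (hq : ‖q‖ < 1) (j b c : ℕ) :
    tailGf q (b + 1 + c) j (2 * c) - tailGf q (b + 1 + c) j (2 * (c + 1))
      = oddPartFactor q (j + 1) * (((q ^ 2) ^ (j + 1)) ^ b * (tailGf q (b + 1 + c) (j + 1) (2 * b)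
        + (q ^ 2) ^ (j + 1) * tailGf q (b + 1 + c) (j + 1) (2 * (b + 1)))) := by
  rw [tailGf_eq_sum hq _ j (2 * c), tailGf_eq_sum hq _ j (2 * (c + 1)), admissible_eq_union,
    Finset.sum_union (disjoint_admissible_boundaryMult _ _ _), add_sub_cancel_left]
  rcases (j + 1).even_or_odd with hj | hj
  · rw [boundaryMult, if_pos hj, oddPartFactor, if_neg (Nat.not_odd_iff_even.mpr hj),
      Finset.sum_pair (by simp), add_zero, show 2 * b + 1 + 1 = 2 * (b + 1) by ring]
    ring
  · have hodd := tailGf_two_mul_add_one hq hj (b + 1 + c)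
    rw [boundaryMult, if_neg (Nat.not_even_iff_odd.mpr hj), oddPartFactor, if_pos hj,
      Finset.sum_insert (by simp), Finset.sum_insert (by simp), Finset.sum_pair (by simp)]
    simp only [add_zero, show 2 * b + 1 + 1 = 2 * (b + 1) by ring, hodd]
    ring

lemma zero_mem_tailSet {k c : ℕ} (hc : c < k) (j : ℕ) : 0 ∈ tailSet k j (2 * c) := by
  have hadm {i s : ℕ} (hs : s < 2 * k) : (0 : ℕ × ℕ) ∈ admissible k i s :=
    mem_admissible.mpr (by simpa using hs)
  exact ⟨fun _ _ => rfl, hadm (by omega), fun _ _ => hadm (by simp [mult]; omega)⟩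

lemma exists_mult_ne_zero {p : MultPair} (hp : p ≠ 0) : ∃ i, mult p i ≠ 0 := by
  contrapose! hp
  exact Prod.ext (Finsupp.ext fun i => (Prod.mk_eq_zero.mp (hp i)).1)
    (Finsupp.ext fun i => (Prod.mk_eq_zero.mp (hp i)).2)

lemma tendsto_tailGf (hq : ‖q‖ < 1) {k c : ℕ} (hc : c < k) :
    Tendsto (fun j => tailGf q k j (2 * c)) atTop (𝓝 1) := by
  classical
  have hbound : Summable ({p : MultPair | mult p 0 = 0}.indicator fun p => ‖q‖ ^ opWt p) :=
    summable_subtype_iff_indicator.mp (summable_norm_pow_opWt hq)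
  have htsum (j : ℕ) : tailGf q k j (2 * c)
      = ∑' p, (tailSet k j (2 * c)).indicator (fun p => q ^ opWt p) p :=
    tsum_subtype _ fun p => q ^ opWt p
  simp only [htsum]
  rw [← tsum_ite_eq (0 : MultPair) (fun _ => (1 : ℂ))]
  refine tendsto_tsum_of_dominated_convergence hbound (fun p => ?_)
    (Eventually.of_forall fun j p => ?_)
  · rcases eq_or_ne p 0 with rfl | hp
    · simp [Set.indicator_of_mem (zero_mem_tailSet hc _), opWt]
    · obtain ⟨i, hi⟩ := exists_mult_ne_zero hp
      refine tendsto_const_nhds.congr' ?_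
      filter_upwards [eventually_ge_atTop i] with j hj
      rw [if_neg hp, Set.indicator_of_notMem fun hmem => hi (hmem.1 i hj)]
  · simp only [norm_indicator_eq_indicator_norm, norm_pow]
    exact Set.indicator_le_indicator_of_subset (tailSet_subset _ _ _) (fun _ => by positivity) p

lemma tsum_uCount_eq_tailGf (hq : ‖q‖ < 1) {k a : ℕ} (hak : a ≤ k) :
    ∑' mn : ℕ × ℕ, (uCount 2 (2 * k) (2 * a) mn.1 mn.2 : ℂ) * q ^ mn.2
      = tailGf q k 0 (2 * (k - a)) := by
  rw [tailGf, ← tsum_ncard_fiber_mul (fun p => (opParts p, opWt p)) (fun mn => q ^ mn.2)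
    (summable_pow_opWt hq (tailSet_subset _ _ _))]
  refine tsum_congr fun mn => ?_
  rw [uCount, ← setOf_isOverPtn_and_uCond hak]
  congr 3
  ext p
  simp only [Set.mem_inter_iff, Set.mem_ofPred_eq, Prod.ext_iff]
  tauto

end Overpartitions

section SangShiYee

variable {q : ℂ}

lemma hasProd_oddPartFactor (hq : ‖q‖ < 1) :
    HasProd (fun j => oddPartFactor q (j + 1)) (qPochInf (-q) (q ^ 2)) := by
  have heven (j : ℕ) : oddPartFactor q (2 * j + 1) = 1 - -q * (q ^ 2) ^ j := by
    rw [oddPartFactor, if_pos (odd_two_mul_add_one j)]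
    ring
  have hodd (j : ℕ) : oddPartFactor q (2 * j + 1 + 1) = 1 :=
    if_neg (Nat.not_odd_iff_even.mpr (odd_two_mul_add_one j).add_one)
  rw [← mul_one (qPochInf (-q) (q ^ 2))]
  refine HasProd.even_mul_odd ?_ ?_
  · simpa only [heven] using hasProd_qPochInf (norm_sq_lt_one hq) (-q)
  · simpa only [hodd] using hasProd_one

lemma isGordonSystem_tailGf (hq : ‖q‖ < 1) :
    IsGordonSystem (fun j => (q ^ 2) ^ (j + 1))
      (fun j b c => (∏ i ∈ Finset.range j, oddPartFactor q (i + 1)) * tailGf q (b + c) j (2 * c))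
      (qPochInf (-q) (q ^ 2)) where
  zero_left j c := by rw [zero_add, tailGf_two_mul_self hq, mul_zero]
  succ_sub j b c := by
    rw [← add_assoc b c 1, add_right_comm b c 1, show c + 1 + b = b + 1 + c by ring,
      show c + (b + 1) = b + 1 + c by ring, Finset.prod_range_succ]
    linear_combination (∏ i ∈ Finset.range j, oddPartFactor q (i + 1)) * tailGf_sub hq j b c
  tendsto b c hb := by
    simpa only [mul_one] using (hasProd_oddPartFactor hq).tendsto_prod_nat.mul
      (tendsto_tailGf hq (show c < b + c by omega))

lemma isGordonSystem_andrewsSeries (hq : ‖q‖ < 1) :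
    IsGordonSystem (fun j => q ^ (j + 1)) (andrewsSeries q)
      (qPochInf (-q) q / qPochInf q q)⁻¹ where
  zero_left := andrewsSeries_zero_left q
  succ_sub := andrewsSeries_sub hq
  tendsto _ c hb := tendsto_andrewsSeries hq hb c

lemma tailGf_zero_eq_andrewsSeries (hq : ‖q‖ < 1) (b c : ℕ) :
    tailGf q (b + c) 0 (2 * c) = qPochInf (-q) q / qPochInf (q ^ 2) (q ^ 2)
      * andrewsSeries (q ^ 2) 0 b c := by
  have hq2 := norm_sq_lt_one hq
  have hneg : qPochInf (-(q ^ 2)) (q ^ 2) ≠ 0 := qPochInf_ne_zero hq2 (by rwa [norm_neg])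
  have hpos : qPochInf (q ^ 2) (q ^ 2) ≠ 0 := qPochInf_ne_zero hq2 hq2
  have hsplit : qPochInf (-q) (q ^ 2) * qPochInf (-(q ^ 2)) (q ^ 2) = qPochInf (-q) q := by
    rw [← qPochInf_sq_mul_qPochInf_sq hq, neg_mul, sq q]
  have handrews := (isGordonSystem_andrewsSeries hq2).const_mul
    (qPochInf (-q) q / qPochInf (q ^ 2) (q ^ 2))
  have hlim : qPochInf (-q) q / qPochInf (q ^ 2) (q ^ 2)
      * (qPochInf (-(q ^ 2)) (q ^ 2) / qPochInf (q ^ 2) (q ^ 2))⁻¹ = qPochInf (-q) (q ^ 2) := by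
    rw [← hsplit]
    field_simp
  rw [hlim] at handrews
  have hz (j : ℕ) : ‖(q ^ 2) ^ (j + 1)‖ = ‖q ^ 2‖ ^ (j + 1) := norm_pow _ _
  have huniq := (isGordonSystem_tailGf hq).unique handrews
    (fun j => (hz j).trans_le (pow_le_one₀ (norm_nonneg _) hq2.le))
    (by simpa only [hz] using
      (summable_nat_add_iff 1).mpr (summable_geometric_of_lt_one (norm_nonneg _) hq2))
  simpa using congrFun₃ huniq 0 b c

end SangShiYee

/-- Sang–Shi–Yee (Theorem 1.12, even case): for `1 ≤ a ≤ k`,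
`Σ_{n ≥ 0} U_{2k, 2a}(n) q^n
  = (−q; q)_∞ (q^{2a}, q^{4k-2a}, q^{4k}; q^{4k})_∞ / (q^2; q^2)_∞`,
where `U_{2k, 2a}(n)` counts overpartitions of `n` satisfying the parity conditions
(i)-(iv) with `d = 2`, summed here over all numbers of parts `m`. -/
theorem sang_shi_yee_even (k a : ℕ) (hk : 1 ≤ k) (ha : 1 ≤ a) (hak : a ≤ k)
    (q : ℂ) (hq : ‖q‖ < 1) :
    (∑' mn : ℕ × ℕ, (uCount 2 (2 * k) (2 * a) mn.1 mn.2 : ℂ) * q ^ mn.2)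
      = qPochInf (-q) q * qPochInf (q ^ (2 * a)) (q ^ (4 * k))
        * qPochInf (q ^ (4 * k - 2 * a)) (q ^ (4 * k))
        * qPochInf (q ^ (4 * k)) (q ^ (4 * k)) / qPochInf (q ^ 2) (q ^ 2) := by
  obtain ⟨c, rfl⟩ := Nat.exists_eq_add_of_le hak
  rw [tsum_uCount_eq_tailGf hq hak, Nat.add_sub_cancel_left, tailGf_zero_eq_andrewsSeries hq,
    andrewsSeries_level_zero (norm_sq_lt_one hq) ha,
    show 4 * (a + c) - 2 * a = 2 * (a + 2 * c) by omega,
    show 4 * (a + c) = 2 * (2 * (a + c)) by ring]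
  simp only [pow_mul]
  ring
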